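/- arXiv:2211.01661 — 2 statements merged into one kernel-verified Lean document; each statement's English description precedes it below -/
import Mathlib

section
/- Let n ≥ 3 be an integer and let C ∈ Ω_n. Define X ∈ Ω_n by X_{i,j} = (2(n−1)/(n−2))·μ_element(C) + C_{i,j} − (⟨R_i,C⟩ + ⟨R_j,C⟩)/(n−2) for i ≠ j (and X_{i,i} = 0). Then X has constant row sums: ⟨R_k,X⟩ = (n−1)·μ_element(C) for every 1 ≤ k ≤ n. -/
open Finset

def hollowSym {n : ℕ} (C : Matrix (Fin n) (Fin n) ℝ) : Prop :=
  C.IsSymm ∧ ∀ i, C i i = 0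

noncomputable def innerH {n : ℕ} (X C : Matrix (Fin n) (Fin n) ℝ) : ℝ :=
  (1 / 2) * ∑ i, ∑ j, X i j * C i j

noncomputable def adjR {n : ℕ} (i : Fin n) : Matrix (Fin n) (Fin n) ℝ :=
  Matrix.of fun k l => if k ≠ l ∧ (i = k ∨ i = l) then 1 else 0

def IsPairing {n : ℕ} (S : Matrix (Fin n) (Fin n) ℝ) : Prop :=
  S.IsSymm ∧ (∀ i, S i i = 0) ∧ (∀ i j, S i j = 0 ∨ S i j = 1) ∧ (∀ i, ∑ j, S i j = 1)

noncomputable def pairings (n : ℕ) : Finset (Matrix (Fin n) (Fin n) ℝ) :=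
  (Finset.univ.filter (fun σ : Equiv.Perm (Fin n) => ∀ i, σ i ≠ i ∧ σ (σ i) = i)).image
    (fun σ => Matrix.of fun i j => if σ i = j then (1 : ℝ) else 0)

noncomputable def pairSum {n : ℕ} (C : Matrix (Fin n) (Fin n) ℝ) : ℝ :=
  ∑ i, ∑ j ∈ Finset.univ.filter (fun j => i < j), C i j

noncomputable def muEl {n : ℕ} (C : Matrix (Fin n) (Fin n) ℝ) : ℝ :=
  (2 / ((n : ℝ) * ((n : ℝ) - 1))) * pairSum C

noncomputable def Jmat (n : ℕ) : Matrix (Fin n) (Fin n) ℝ := Matrix.of fun _ _ => 1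

noncomputable def muSum (n : ℕ) (C : Matrix (Fin n) (Fin n) ℝ) : ℝ :=
  (1 / (Nat.doubleFactorial (n - 1) : ℝ)) * ∑ S ∈ pairings n, innerH S C

noncomputable def sig2El {n : ℕ} (C : Matrix (Fin n) (Fin n) ℝ) : ℝ :=
  (2 / ((n : ℝ) * ((n : ℝ) - 1))) *
    ∑ i, ∑ j ∈ Finset.univ.filter (fun j => i < j), (C i j - muEl C) ^ 2

noncomputable def sig2Sum (n : ℕ) (C : Matrix (Fin n) (Fin n) ℝ) : ℝ :=
  (1 / (Nat.doubleFactorial (n - 1) : ℝ)) *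
    ∑ S ∈ pairings n, (innerH S C - muSum n C) ^ 2

lemma innerH_adjR {n : ℕ} (X : Matrix (Fin n) (Fin n) ℝ) (hX : hollowSym X) (k : Fin n) :
    innerH (adjR k) X = ∑ j, X k j := by
  have h1 : ∀ i j, adjR k i j * X i j
      = (if k = i then X i j else 0) + (if k = j then X i j else 0) := by
    intro i j
    by_cases hij : i = j
    · subst hij
      simp [adjR, hX.2]
    · by_cases h1 : k = i
      · subst h1
        simp [adjR, hij]
      · by_cases h2 : k = j
        · subst h2
          simp [adjR, hij, h1]
        · simp [adjR, h1, h2]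
  have h2 : ∀ i, X i k = X k i := fun i => hX.1.apply k i
  unfold innerH
  simp only [h1, Finset.sum_add_distrib]
  rw [Finset.sum_comm]
  simp [h2]
  ring

lemma two_pairSum {n : ℕ} (C : Matrix (Fin n) (Fin n) ℝ) (hC : hollowSym C) :
    2 * pairSum C = ∑ i, ∑ j, C i j := by
  have h1 : ∀ i j, C i j = (if i < j then C i j else 0) + (if j < i then C j i else 0) := by
    intro i j
    rcases lt_trichotomy i j with h | h | h
    · simp [h, h.not_gt]
    · subst h
      simp [hC.2]
    · simp [h, h.not_gt, hC.1.apply j i]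
  have h2 : ∑ i, ∑ j, C i j = ∑ i, ∑ j, ((if i < j then C i j else 0)
      + (if j < i then C j i else 0)) :=
    Finset.sum_congr rfl fun i _ => Finset.sum_congr rfl fun j _ => h1 i j
  rw [h2]
  simp only [Finset.sum_add_distrib]
  rw [Finset.sum_comm (f := fun i j => if j < i then C j i else 0)]
  simp only [pairSum, Finset.sum_filter]
  ring

theorem stmt17 (n : ℕ) (hn : 3 ≤ n) (C : Matrix (Fin n) (Fin n) ℝ)
    (hC : hollowSym C) (X : Matrix (Fin n) (Fin n) ℝ)
    (hX : X = Matrix.of fun i j =>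
      if i = j then 0
      else (2 * ((n : ℝ) - 1) / ((n : ℝ) - 2)) * muEl C + C i j
        - (innerH (adjR i) C + innerH (adjR j) C) / ((n : ℝ) - 2)) :
    ∀ k : Fin n, innerH (adjR k) X = ((n : ℝ) - 1) * muEl C := by
  have hXs : hollowSym X := by
    refine ⟨?_, fun i => by simp [hX]⟩
    ext i j
    simp only [hX, Matrix.transpose_apply, Matrix.of_apply]
    by_cases h : i = j
    · simp [h]
    · rw [if_neg h, if_neg (Ne.symm h), hC.1.apply i j]
      ring
  intro k
  have hn' : (3 : ℝ) ≤ n := by exact_mod_cast hn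
  have e0 : (n : ℝ) ≠ 0 := by linarith
  have e1 : (n : ℝ) - 1 ≠ 0 := by linarith
  have e2 : (n : ℝ) - 2 ≠ 0 := by linarith
  have hT : ∑ i, ∑ j, C i j = n * ((n : ℝ) - 1) * muEl C := by
    rw [← two_pairSum C hC, muEl]
    field_simp
  rw [innerH_adjR X hXs k]
  simp only [innerH_adjR C hC] at hX
  have hk : ∀ j, X k j = ((2 * ((n : ℝ) - 1) / ((n : ℝ) - 2)) * muEl C
        - (∑ l, C k l) / ((n : ℝ) - 2)) + C k j - (∑ l, C j l) / ((n : ℝ) - 2)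
      - (if k = j then ((2 * ((n : ℝ) - 1) / ((n : ℝ) - 2)) * muEl C
        - 2 * (∑ l, C k l) / ((n : ℝ) - 2)) else 0) := by
    intro j
    simp only [hX, Matrix.of_apply]
    by_cases h : k = j
    · subst h
      simp only [if_true, hC.2]
      ring
    · simp only [if_neg h]
      ring
  simp only [hk, Finset.sum_sub_distrib, Finset.sum_add_distrib, ← Finset.sum_div, hT]
  simp
  field_simp
  ring
end

section
/- Let n be an even integer with n ≥ 6 and let C ∈ Ω_n. Define X ∈ Ω_n by X_{i,j} = (2(n−1)/(n−2))·μ_element(C) + C_{i,j} − (⟨R_i,C⟩ + ⟨R_j,C⟩)/(n−2) for i ≠ j (and X_{i,i} = 0). Then X minimizes the element variance over the equivalence class of C: for every Y ∈ Ω_n with Y ~ C, σ²_element(X,X) ≤ σ²_element(Y,Y). -/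
open Finset

lemma exists_base (n : ℕ) (he : Even n) :
    ∃ s : Fin n → Fin n, ∀ i, s i ≠ i ∧ s (s i) = i := by
  obtain ⟨m, hm⟩ := he
  refine ⟨fun x => if h : x.1 % 2 = 0 then ⟨x.1 + 1, by omega⟩ else ⟨x.1 - 1, by omega⟩, ?_⟩
  intro i
  by_cases h : i.1 % 2 = 0
  · have h2 : ¬ (i.1 + 1) % 2 = 0 := by omega
    simp [h, h2, Fin.ext_iff]
  · have h2 : (i.1 - 1) % 2 = 0 := by omega
    simp only [h, h2, Fin.ext_iff, ne_eq, dite_true, dite_false]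
    omega

lemma conj_ffi {n : ℕ} (s : Fin n → Fin n) (hs : ∀ i, s i ≠ i ∧ s (s i) = i) (a b : Fin n) :
    ∀ i, Equiv.swap a b (s (Equiv.swap a b i)) ≠ i ∧
      Equiv.swap a b (s (Equiv.swap a b (Equiv.swap a b (s (Equiv.swap a b i))))) = i := by
  intro i
  refine ⟨fun h => ?_, ?_⟩
  · have := congrArg (Equiv.swap a b) h
    rw [Equiv.swap_apply_self] at this
    exact (hs _).1 this
  · rw [Equiv.swap_apply_self, (hs _).2, Equiv.swap_apply_self]

lemma sum_ffi {n : ℕ} (D : Matrix (Fin n) (Fin n) ℝ) (s : Fin n → Fin n)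
    (hs : ∀ i, s i ≠ i ∧ s (s i) = i) (hD : ∀ S, IsPairing S → innerH S D = 0) :
    ∑ i, D i (s i) = 0 := by
  have h := hD (Matrix.of fun i j => if s i = j then (1 : ℝ) else 0) ?_
  · unfold innerH at h
    simp at h
    exact h
  · refine ⟨?_, ?_, ?_, ?_⟩
    · ext i j
      simp only [Matrix.transpose_apply, Matrix.of_apply]
      have : s j = i ↔ s i = j := by
        constructor <;> (intro h; rw [← h]; exact (hs _).2)
      simp [this]
    · intro i; simp [(hs i).1]
    · intro i j; simp only [Matrix.of_apply]; split_ifs <;> simp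
    · intro i; simp

lemma exists_two {n : ℕ} (he : Even n) (i j k l : Fin n) (hij : i ≠ j) (hik : i ≠ k)
    (hil : i ≠ l) (hjk : j ≠ k) (hjl : j ≠ l) (hkl : k ≠ l) :
    ∃ s : Fin n → Fin n, (∀ i, s i ≠ i ∧ s (s i) = i) ∧ s i = j ∧ s k = l := by
  obtain ⟨s, hs⟩ := exists_base n he
  obtain ⟨s, hs, h1⟩ : ∃ s : Fin n → Fin n, (∀ i, s i ≠ i ∧ s (s i) = i) ∧ s i = j := by
    refine ⟨_, conj_ffi s hs (s i) j, ?_⟩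
    rw [Equiv.swap_apply_of_ne_of_ne (hs i).1.symm hij, Equiv.swap_apply_left]
  refine ⟨_, conj_ffi s hs (s k) l, ?_, ?_⟩
  · have h2 : i ≠ s k := fun h => by
      have := (hs k).2
      rw [← h, h1] at this; exact hjk this
    have h3 : j ≠ s k := fun h => by
      have h4 := (hs k).2
      have h5 := (hs i).2
      rw [h1] at h5
      rw [← h, h5] at h4; exact hik h4
    rw [Equiv.swap_apply_of_ne_of_ne h2 hil, h1, Equiv.swap_apply_of_ne_of_ne h3 hjl]
  · rw [Equiv.swap_apply_of_ne_of_ne (hs k).1.symm hkl, Equiv.swap_apply_left]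

lemma quad {n : ℕ} (he : Even n) (D : Matrix (Fin n) (Fin n) ℝ) (hsym : ∀ i j, D i j = D j i)
    (hD : ∀ S, IsPairing S → innerH S D = 0)
    (i j k l : Fin n) (hij : i ≠ j) (hik : i ≠ k)
    (hil : i ≠ l) (hjk : j ≠ k) (hjl : j ≠ l) (hkl : k ≠ l) :
    D i j + D k l = D i k + D j l := by
  obtain ⟨s, hs, h1, h2⟩ := exists_two he i j k l hij hik hil hjk hjl hkl
  have h3 : s j = i := by rw [← h1]; exact (hs _).2
  have h4 : s l = k := by rw [← h2]; exact (hs _).2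
  have e1 := sum_ffi D s hs hD
  have e2 := sum_ffi D _ (conj_ffi s hs j k) hD
  have e3 : ∑ m, (D m (s m) - D m (Equiv.swap j k (s (Equiv.swap j k m)))) = 0 := by
    rw [Finset.sum_sub_distrib, e1, e2, sub_zero]
  rw [← Finset.sum_subset (Finset.subset_univ ({i, j, k, l} : Finset (Fin n)))] at e3
  · rw [Finset.sum_insert (by simp [*]), Finset.sum_insert (by simp [*]),
      Finset.sum_insert (by simp [*]), Finset.sum_singleton] at e3
    rw [Equiv.swap_apply_left, Equiv.swap_apply_right,
      Equiv.swap_apply_of_ne_of_ne hij hik,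
      Equiv.swap_apply_of_ne_of_ne hjl.symm hkl.symm, h1, h2, h3, h4,
      Equiv.swap_apply_left, Equiv.swap_apply_right,
      Equiv.swap_apply_of_ne_of_ne hij hik,
      Equiv.swap_apply_of_ne_of_ne hjl.symm hkl.symm, hsym j i, hsym l k, hsym k i,
      hsym l j] at e3
    linarith
  · intro m _ hm
    simp only [Finset.mem_insert, Finset.mem_singleton, not_or] at hm
    obtain ⟨a, b, c, d⟩ := hm
    have h5 : s m ≠ j := fun h => a (by rw [← (hs m).2, h, h3])
    have h6 : s m ≠ k := fun h => d (by rw [← (hs m).2, h, h2])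
    rw [Equiv.swap_apply_of_ne_of_ne b c, Equiv.swap_apply_of_ne_of_ne h5 h6, sub_self]

lemma decomp {n : ℕ} (hn : 3 ≤ n) (D : Matrix (Fin n) (Fin n) ℝ) (hsym : ∀ i j, D i j = D j i)
    (hq : ∀ i j k l : Fin n, i ≠ j → i ≠ k → i ≠ l → j ≠ k → j ≠ l → k ≠ l →
      D i j + D k l = D i k + D j l) :
    ∃ a : Fin n → ℝ, ∀ i j, i ≠ j → D i j = a i + a j := by
  obtain ⟨p, q, r, hpq, hpr, hqr⟩ : ∃ p q r : Fin n, p ≠ q ∧ p ≠ r ∧ q ≠ r :=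
    ⟨⟨0, by omega⟩, ⟨1, by omega⟩, ⟨2, by omega⟩, by simp, by simp, by simp⟩
  set c := (D p q + D p r - D q r) / 2 with hc
  -- the claim for indices other than `p`
  have key : ∀ i j, i ≠ j → i ≠ p → j ≠ p → D i j = D i p + D j p - 2 * c := by
    have good : ∀ i j, i ≠ j → i ≠ p → j ≠ p → i ≠ q → j ≠ q →
        D i j = D i p + D j p - 2 * c := by
      intro i j hij hip hjp hiq hjq
      have e1 := hq i j p q hij hip hiq hjp hjq hpq
      by_cases hjr : j = r
      · subst hjr
        rw [hc, hsym q j, hsym p j] at *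
        linarith
      · have e2 := hq j q p r hjq hjp hjr hpq.symm hqr hpr
        rw [hc]; linarith
    have good2 : ∀ j, j ≠ q → j ≠ p → D q j = D q p + D j p - 2 * c := by
      intro j hjq hjp
      by_cases hjr : j = r
      · subst hjr
        rw [hc, hsym q p, hsym j p]; ring
      · have e2 := hq q j p r hjq.symm hpq.symm hqr hjp hjr hpr
        have e3 := hq q j r p hjq.symm hqr hpq.symm hjr hjp hpr.symm
        have := hsym q p
        have := hsym r p
        rw [hc]; linarith
    intro i j hij hip hjp
    by_cases hiq : i = q
    · subst hiq; exact good2 j hij.symm hjp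
    · by_cases hjq : j = q
      · subst hjq
        have := good2 i hij hip
        rw [hsym i j]; linarith
      · exact good i j hij hip hjp hiq hjq
  refine ⟨fun i => if i = p then c else D i p - c, ?_⟩
  intro i j hij
  by_cases hip : i = p
  · subst hip
    simp only [if_pos, if_neg hij.symm]
    rw [hsym i j]; ring
  · by_cases hjp : j = p
    · subst hjp
      simp only [if_pos, if_neg hij]
      ring
    · simp only [if_neg hip, if_neg hjp]
      rw [key i j hij hip hjp]; ring

lemma pairSum_eq {n : ℕ} (f : Fin n → Fin n → ℝ) (hf : ∀ i j, f i j = f j i) :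
    ∑ i, ∑ j ∈ Finset.univ.filter (fun j => i < j), f i j
      = (1 / 2) * ∑ i, ∑ j, (if i = j then 0 else f i j) := by
  have h1 : ∑ i, ∑ j ∈ Finset.univ.filter (fun j => i < j), f i j
      = ∑ i, ∑ j, if i < j then f i j else 0 := by
    simp [Finset.sum_filter]
  have h2 : ∑ i, ∑ j, (if i < j then f i j else 0) = ∑ i, ∑ j, if j < i then f i j else 0 := by
    rw [Finset.sum_comm]
    refine Finset.sum_congr rfl fun i _ => Finset.sum_congr rfl fun j _ => ?_
    rw [hf]
  have h3 : ∑ i, ∑ j, (if i = j then 0 else f i j)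
      = ∑ i, ∑ j, (if i < j then f i j else 0) + ∑ i, ∑ j, (if j < i then f i j else 0) := by
    simp only [← Finset.sum_add_distrib]
    refine Finset.sum_congr rfl fun i _ => Finset.sum_congr rfl fun j _ => ?_
    rcases lt_trichotomy i j with h | h | h
    · simp [h, h.ne, h.not_gt]
    · simp [h]
    · simp [h, h.ne', h.not_gt]
  rw [h3, ← h2, h1]; ring

lemma adj_eq {n : ℕ} (C : Matrix (Fin n) (Fin n) ℝ) (hC : hollowSym C) (i : Fin n) :
    innerH (adjR i) C = ∑ j, C i j := by
  have hs : ∀ i j, C i j = C j i := fun i j => hC.1.apply j i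
  have h : ∀ k l, adjR i k l * C k l = (if i = k then C k l else 0) + (if i = l then C k l else 0) := by
    intro k l
    simp only [adjR, Matrix.of_apply]
    by_cases hkl : k = l
    · subst hkl; simp [hC.2]
    · by_cases h1 : i = k
      · subst h1; simp [hkl]
      · simp [hkl, h1]
  unfold innerH
  simp only [h, Finset.sum_add_distrib]
  rw [Finset.sum_comm]
  simp
  rw [Finset.sum_congr rfl fun x _ => hs x i]
  ring

lemma sum_offdiag {n : ℕ} (i : Fin n) (f : Fin n → ℝ) :
    ∑ j, (if i = j then 0 else f j) = ∑ j, f j - f i := by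
  have : ∀ j, (if i = j then 0 else f j) = f j - (if i = j then f j else 0) := by
    intro j; split_ifs <;> simp
  simp [this]

theorem stmt18 (n : ℕ) (hn : 6 ≤ n) (he : Even n) (C : Matrix (Fin n) (Fin n) ℝ)
    (hC : hollowSym C) (X : Matrix (Fin n) (Fin n) ℝ)
    (hX : X = Matrix.of fun i j =>
      if i = j then 0
      else (2 * ((n : ℝ) - 1) / ((n : ℝ) - 2)) * muEl C + C i j
        - (innerH (adjR i) C + innerH (adjR j) C) / ((n : ℝ) - 2)) :
    ∀ Y : Matrix (Fin n) (Fin n) ℝ, hollowSym Y →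
      (∀ S, IsPairing S → innerH S Y = innerH S C) → sig2El X ≤ sig2El Y := by
  intro Y hY hS
  have hn' : (6 : ℝ) ≤ n := by exact_mod_cast hn
  have hn0 : (n : ℝ) ≠ 0 := by linarith
  have hn1 : (n : ℝ) - 1 ≠ 0 := by linarith
  have hn2 : (n : ℝ) - 2 ≠ 0 := by linarith
  have hsC : ∀ i j, C i j = C j i := fun i j => hC.1.apply j i
  have hsY : ∀ i j, Y i j = Y j i := fun i j => hY.1.apply j i
  obtain ⟨a, ha⟩ : ∃ a : Fin n → ℝ, ∀ i j, i ≠ j → (Y - C) i j = a i + a j := by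
    have hsD : ∀ i j, (Y - C) i j = (Y - C) j i := by
      intro i j; simp only [Matrix.sub_apply]; rw [hsY, hsC]
    refine decomp (by omega) (Y - C) hsD fun i j k l => quad he (Y - C) hsD ?_ i j k l
    intro S hSp
    have := hS S hSp
    unfold innerH at *
    simp only [Matrix.sub_apply, mul_sub, Finset.sum_sub_distrib]
    linarith
  set R : Fin n → ℝ := fun i => ∑ j, C i j with hR
  set μ := muEl C with hμ
  have hXe : ∀ i j, X i j = if i = j then 0 else
      (2 * ((n : ℝ) - 1) / ((n : ℝ) - 2)) * μ + C i j - (R i + R j) / ((n : ℝ) - 2) := by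
    intro i j
    rw [hX]; simp only [Matrix.of_apply, adj_eq C hC, hR]
  have hsX : ∀ i j, X i j = X j i := by
    intro i j
    rw [hXe, hXe, hsC i j, add_comm (R i)]
    simp only [eq_comm]
  have hT : ∑ i, R i = n * (n - 1) * μ := by
    rw [hμ, muEl, pairSum, pairSum_eq _ hsC]
    simp only [sum_offdiag, hC.2, sub_zero]
    field_simp
    simp [hR]
  have hrow : ∀ i, ∑ j, X i j = (n - 1) * μ := by
    intro i
    simp only [hXe]
    rw [sum_offdiag]
    have : ∑ j, ((2 * ((n : ℝ) - 1) / ((n : ℝ) - 2)) * μ + C i j - (R i + R j) / ((n : ℝ) - 2))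
        = n * ((2 * ((n : ℝ) - 1) / ((n : ℝ) - 2)) * μ) + R i
          - (n * R i + n * (n - 1) * μ) / ((n : ℝ) - 2) := by
      rw [← hT, Finset.sum_sub_distrib, Finset.sum_add_distrib, ← Finset.sum_div,
        Finset.sum_add_distrib]
      simp [hR]
    rw [this, hC.2]
    field_simp
    ring
  have hX0 : ∀ i, X i i = 0 := fun i => by simp [hXe]
  have hμX : muEl X = μ := by
    rw [muEl, pairSum, pairSum_eq _ hsX]
    simp only [sum_offdiag, hX0, sub_zero, hrow]
    simp
    field_simp
  -- Y - μ_Y = (X - μ) + (e i + e j)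
  set e : Fin n → ℝ := fun i => a i + R i / ((n : ℝ) - 2)
    - (((n : ℝ) - 1) / ((n : ℝ) - 2)) * μ - (muEl Y - μ) / 2 with hedef
  have hYX : ∀ i j, i ≠ j → Y i j - muEl Y = (X i j - μ) + (e i + e j) := by
    intro i j hij
    have h1 := ha i j hij
    rw [Matrix.sub_apply] at h1
    rw [hXe, if_neg hij, hedef]
    have : Y i j = C i j + (a i + a j) := by linarith
    rw [this]
    ring
  have hcross : ∑ i, ∑ j ∈ Finset.univ.filter (fun j => i < j), (X i j - μ) * (e i + e j) = 0 := by
    rw [pairSum_eq (fun i j => (X i j - μ) * (e i + e j))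
      (fun i j => by rw [hsX i j, add_comm (e i)])]
    have h0 : ∀ i, ∑ j, (if i = j then 0 else (X i j - μ)) = 0 := by
      intro i
      rw [sum_offdiag, Finset.sum_sub_distrib, hrow, hX0]
      simp; ring
    have h1 : ∑ i, ∑ j, (if i = j then 0 else (X i j - μ) * (e i + e j))
        = ∑ i, ∑ j, (if i = j then 0 else (X i j - μ)) * e i
          + ∑ i, ∑ j, (if i = j then 0 else (X i j - μ)) * e j := by
      simp only [← Finset.sum_add_distrib]
      refine Finset.sum_congr rfl fun i _ => Finset.sum_congr rfl fun j _ => ?_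
      split_ifs <;> ring
    have h2 : ∑ i, ∑ j, (if i = j then 0 else (X i j - μ)) * e j
        = ∑ i, ∑ j, (if i = j then 0 else (X i j - μ)) * e i := by
      rw [Finset.sum_comm]
      refine Finset.sum_congr rfl fun i _ => Finset.sum_congr rfl fun j _ => ?_
      rw [hsX j i]; simp only [eq_comm]
    rw [h1, h2]
    simp only [← Finset.sum_mul, h0, zero_mul, Finset.sum_const_zero, add_zero, mul_zero]
  unfold sig2El
  rw [hμX]
  refine mul_le_mul_of_nonneg_left ?_ (by
    apply div_nonneg <;> nlinarith)
  have : ∑ i, ∑ j ∈ Finset.univ.filter (fun j => i < j),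
      ((X i j - μ) ^ 2 + 2 * ((X i j - μ) * (e i + e j)))
      ≤ ∑ i, ∑ j ∈ Finset.univ.filter (fun j => i < j), (Y i j - muEl Y) ^ 2 := by
    refine Finset.sum_le_sum fun i _ => Finset.sum_le_sum fun j hj => ?_
    have hij : i ≠ j := (Finset.mem_filter.mp hj).2.ne
    rw [hYX i j hij]
    nlinarith [sq_nonneg (e i + e j)]
  simp only [Finset.sum_add_distrib, ← Finset.mul_sum, hcross] at this
  linarith
end
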